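/- There exist a finite type S, a Markov kernel P assigning to each s ∈ S a probability mass function P(·|s) on S, a reward function r : S → ℝ, a discount γ ∈ [0,1), a non-constant function V_tar : S → ℝ, a state x ∈ S, and a finite set 𝒱 of functions S → ℝ containing the Bellman backup [T V_tar] (where [T V_tar](s) = r(s) + γ·∑_{s'} P(s'|s)·V_tar(s')), such that no minimizer over 𝒱 of the expected one-step MuZero surrogate loss V̂ ↦ E[(V̂(X) − (r(Y) + γ·V_tar(Y')))²] equals [T V_tar], where X and Y are independent samples from P(·|x) and Y' is a sample from P(·|Y). That is, the MuZero value-learning surrogate loss with model rollout depth m = 1 and bootstrap depth b = 1 is minimum-uncalibrated for value function learning even when the model equals the true transition kernel. -/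

import Mathlib

open Finset

/-- `IsPMF μ` says `μ` is a probability mass function on the finite type `S`. -/
def IsPMF {S : Type*} [Fintype S] (μ : S → ℝ) : Prop :=
  (∀ s, 0 ≤ μ s) ∧ ∑ s, μ s = 1

/-- The Bellman backup `[T V_tar](s) = r(s) + γ·∑_{s'} P(s'|s)·V_tar(s')`. -/
noncomputable def bellmanBackup {S : Type*} [Fintype S] (P : S → S → ℝ) (r : S → ℝ)
    (γ : ℝ) (Vtar : S → ℝ) : S → ℝ :=
  fun s => r s + γ * ∑ s', P s s' * Vtar s'

/-- Expected one-step MuZero surrogate loss at state `x` of candidate `Vhat` against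
target `Vtar`: `E[(Vhat(X) − (r(Y) + γ·Vtar(Y')))²]` with `X ∼ P(·|x)`, `Y ∼ P(·|x)`
independent of `X`, and `Y' ∼ P(·|Y)`. -/
noncomputable def muZeroLoss {S : Type*} [Fintype S] (P : S → S → ℝ) (r : S → ℝ)
    (γ : ℝ) (Vtar : S → ℝ) (x : S) (Vhat : S → ℝ) : ℝ :=
  ∑ a, ∑ b, ∑ c, P x a * P x b * P b c * (Vhat a - (r b + γ * Vtar c)) ^ 2

/-- Body of the uncalibratedness statement: `P` is a Markov kernel, `γ ∈ [0,1)`,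
`Vtar` is non-constant, `𝒱` contains the Bellman backup `[T Vtar]`, yet no minimizer of
the expected one-step MuZero surrogate loss over `𝒱` equals `[T Vtar]`. -/
def MuZeroUncalibratedBody (S : Type) [Fintype S] (P : S → S → ℝ) (r : S → ℝ)
    (γ : ℝ) (Vtar : S → ℝ) (x : S) (V : Finset (S → ℝ)) : Prop :=
  (∀ s, IsPMF (P s)) ∧ 0 ≤ γ ∧ γ < 1 ∧ (∃ s t : S, Vtar s ≠ Vtar t) ∧
  bellmanBackup P r γ Vtar ∈ V ∧
  ∀ Vhat ∈ V,
    (∀ V' ∈ V, muZeroLoss P r γ Vtar x Vhat ≤ muZeroLoss P r γ Vtar x V') →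
    Vhat ≠ bellmanBackup P r γ Vtar

/-- The MuZero value-learning surrogate loss with `m = 1` and `b = 1` is
minimum-uncalibrated for value function learning even when the model is the true
transition kernel. -/
theorem muZero_value_loss_uncalibrated :
    ∃ (S : Type) (inst : Fintype S) (P : S → S → ℝ) (r : S → ℝ) (γ : ℝ)
      (Vtar : S → ℝ) (x : S) (V : Finset (S → ℝ)),
      @MuZeroUncalibratedBody S inst P r γ Vtar x V := by
  classical
  refine ⟨Bool, inferInstance, fun _ _ => 1 / 2, fun s => if s then 1 else 0, 1 / 2,
    fun s => if s then 1 else 0, true,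
    {bellmanBackup (fun _ _ : Bool => (1 / 2 : ℝ)) (fun s => if s then 1 else 0) (1 / 2)
      (fun s => if s then 1 else 0), fun _ => 3 / 4}, ?_, by norm_num, by norm_num,
    ⟨true, false, by simp⟩, by simp, ?_⟩
  · intro s
    constructor
    · intro _
      norm_num
    · simp
  · rintro Vhat - hmin rfl
    -- The mean of the backup under `P x` has strictly smaller loss than the backup itself.
    have hle := hmin (fun _ => 3 / 4) (by simp)
    norm_num [muZeroLoss, bellmanBackup] at hle
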